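/- arXiv:2003.00371 — 2 statements merged into one kernel-verified Lean document; each statement's English description precedes it below -/
import Mathlib

section
/- Let γ1 > 0 and γ2 > 0, and suppose the step size satisfies 0 < t ≤ α²/(2α²γ2 + 1) and the initialization satisfies αI ⪯ Ω^{(0)} ⪯ βI. Then every GEN-ISTA iterate satisfies αI ⪯ Ω^{(k)} ⪯ b'I for all k ≥ 0, where b' = ‖Ω*‖₂ + ‖Ω^{(0)} − Ω*‖_F, and moreover b' ≤ β + √p·(β − α). -/
open Matrix BigOperators Kronecker

/-- Frobenius norm of a real matrix. -/
noncomputable def frobNorm {n : Type*} [Fintype n] (A : Matrix n n ℝ) : ℝ :=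
  Real.sqrt (∑ i, ∑ j, (A i j)^2)

/-- Entrywise L1 norm of a real matrix. -/
noncomputable def l1Norm {n : Type*} [Fintype n] (A : Matrix n n ℝ) : ℝ :=
  ∑ i, ∑ j, |A i j|

/-- Spectral (ℓ2 operator) norm of a real matrix. -/
noncomputable def specNorm {n : Type*} [Fintype n] [DecidableEq n] (A : Matrix n n ℝ) : ℝ :=
  ‖Matrix.toEuclideanCLM (𝕜 := ℝ) A‖

/-- Largest eigenvalue ρ₁(A) of a symmetric real matrix (junk value 0 otherwise). -/
noncomputable def maxEig {n : Type*} [Fintype n] [DecidableEq n] (A : Matrix n n ℝ) : ℝ :=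
  if h : A.IsHermitian then ⨆ i, h.eigenvalues i else 0

/-- Smallest eigenvalue ρ_p(A) of a symmetric real matrix (junk value 0 otherwise). -/
noncomputable def minEig {n : Type*} [Fintype n] [DecidableEq n] (A : Matrix n n ℝ) : ℝ :=
  if h : A.IsHermitian then ⨅ i, h.eigenvalues i else 0

/-- Loewner order: A ⪯ B iff B - A is positive semidefinite. -/
def loewnerLE {n : Type*} [Fintype n] (A B : Matrix n n ℝ) : Prop := (B - A).PosSemidef

/-- Entrywise soft-thresholding operator. -/
noncomputable def Sft {n : Type*} (A : Matrix n n ℝ) (τ : ℝ) : Matrix n n ℝ :=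
  Matrix.of fun i j => Real.sign (A i j) * max (|A i j| - τ) 0

/-- The elastic-net penalized Gaussian likelihood objective
  F(Ω) = tr(S̃Ω) − log det Ω + γ1‖Ω‖₁ + γ2‖Ω‖_F². -/
noncomputable def genObj {n : Type*} [Fintype n] [DecidableEq n]
    (S : Matrix n n ℝ) (γ1 γ2 : ℝ) (Ω : Matrix n n ℝ) : ℝ :=
  (S * Ω).trace - Real.log Ω.det + γ1 * l1Norm Ω + γ2 * (frobNorm Ω)^2

/-
Both `α` and `β` solve a scalar equation `x⁻¹ - 2 * γ2 * x = c`, which is what the first-order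
optimality condition for the minimizer `Ω*` becomes on its eigenvalues once the subgradient of the
penalty is bounded in spectral norm by `p * γ1`. As the left side is decreasing in `x`, this gives
`αI ⪯ Ω* ⪯ βI`. On matrices above `αI`, the difference of two forward gradient steps is, after
vectorization, multiplication by `(1 - 2 * t * γ2) I - t B⁻¹ ⊗ A⁻¹`, and the bound on `t` puts this
matrix between `0` and `I`. Soft thresholding is a proximal map with fixed point `Ω*`, so the
iterates never move away from `Ω*` in Frobenius norm, which gives the upper bound. For the lower
bound, thresholding changes each entry by at most `t * γ1`, hence costs at most `p * t * γ1` in the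
Loewner order, and this is exactly the slack left by the equation defining `α`.
-/

open scoped MatrixOrder
open Filter Topology

section LoewnerOrder

variable {n : Type*} [DecidableEq n] {A : Matrix n n ℝ}

lemma isHermitian_of_smul_one_le {a : ℝ} (h : a • (1 : Matrix n n ℝ) ≤ A) : A.IsHermitian := by
  simpa using (isHermitian_one.smul (IsSelfAdjoint.all a)).add h.1

lemma posDef_of_smul_one_le {a : ℝ} (ha : 0 < a) (h : a • (1 : Matrix n n ℝ) ≤ A) :
    A.PosDef := by
  simpa using (PosDef.one.smul ha).add_posSemidef h

variable [Fintype n]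

lemma smul_one_le_cfc_iff (hA : A.IsHermitian) (f : ℝ → ℝ) {r : ℝ} :
    r • (1 : Matrix n n ℝ) ≤ cfc f A ↔ ∀ l ∈ spectrum ℝ A, r ≤ f l := by
  rw [← Algebra.algebraMap_eq_smul_one]
  exact algebraMap_le_cfc_iff f r A (A.finite_real_spectrum.continuousOn f) hA

lemma cfc_le_smul_one_iff (hA : A.IsHermitian) (f : ℝ → ℝ) {r : ℝ} :
    cfc f A ≤ r • (1 : Matrix n n ℝ) ↔ ∀ l ∈ spectrum ℝ A, f l ≤ r := by
  rw [← Algebra.algebraMap_eq_smul_one]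
  exact cfc_le_algebraMap_iff f r A (A.finite_real_spectrum.continuousOn f) hA

lemma smul_one_le_iff (hA : A.IsHermitian) {r : ℝ} :
    r • (1 : Matrix n n ℝ) ≤ A ↔ ∀ l ∈ spectrum ℝ A, r ≤ l := by
  rw [← smul_one_le_cfc_iff hA (fun l => l), cfc_id' ℝ A hA.isSelfAdjoint]

lemma le_smul_one_iff (hA : A.IsHermitian) {r : ℝ} :
    A ≤ r • (1 : Matrix n n ℝ) ↔ ∀ l ∈ spectrum ℝ A, l ≤ r := by
  rw [← cfc_le_smul_one_iff hA (fun l => l), cfc_id' ℝ A hA.isSelfAdjoint]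

lemma le_maxEig_smul_one (hA : A.IsHermitian) : A ≤ maxEig A • (1 : Matrix n n ℝ) := by
  rw [le_smul_one_iff hA, hA.spectrum_real_eq_range_eigenvalues, maxEig, dif_pos hA]
  rintro _ ⟨i, rfl⟩
  exact le_ciSup (Set.finite_range _).bddAbove i

lemma minEig_smul_one_le (hA : A.IsHermitian) : minEig A • (1 : Matrix n n ℝ) ≤ A := by
  rw [smul_one_le_iff hA, hA.spectrum_real_eq_range_eigenvalues, minEig, dif_pos hA]
  rintro _ ⟨i, rfl⟩
  exact ciInf_le (Set.finite_range _).bddBelow i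

lemma specNorm_nonneg (A : Matrix n n ℝ) : 0 ≤ specNorm A := norm_nonneg _

open scoped Matrix.Norms.L2Operator in
lemma specNorm_le_iff (hA : A.IsHermitian) {r : ℝ} (hr : 0 ≤ r) :
    specNorm A ≤ r ↔ (-r) • (1 : Matrix n n ℝ) ≤ A ∧ A ≤ r • (1 : Matrix n n ℝ) := by
  have norm_le : specNorm A ≤ r ↔ ∀ l ∈ spectrum ℝ A, ‖l‖ ≤ r := by
    rw [← norm_cfc_le_iff (fun l => l) A hr (A.finite_real_spectrum.continuousOn _)
        hA.isSelfAdjoint,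
      cfc_id' ℝ A hA.isSelfAdjoint]
    rfl
  simp only [norm_le, smul_one_le_iff hA, le_smul_one_iff hA, Real.norm_eq_abs, abs_le,
    forall_and]

lemma le_smul_one_of_specNorm_le (hA : A.IsHermitian) {r : ℝ} (h : specNorm A ≤ r) :
    A ≤ r • (1 : Matrix n n ℝ) :=
  ((specNorm_le_iff hA ((specNorm_nonneg A).trans h)).1 h).2

lemma neg_specNorm_smul_one_le (hA : A.IsHermitian) :
    (-specNorm A) • (1 : Matrix n n ℝ) ≤ A :=
  ((specNorm_le_iff hA (specNorm_nonneg A)).1 le_rfl).1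

end LoewnerOrder

section PosDef

variable {n : Type*} [Finite n] {A W : Matrix n n ℝ}

lemma exists_pos_smul_one_le [DecidableEq n] (hA : A.PosDef) :
    ∃ m : ℝ, 0 < m ∧ m • (1 : Matrix n n ℝ) ≤ A := by
  cases nonempty_fintype n
  cases isEmpty_or_nonempty n
  · exact ⟨1, one_pos, (Subsingleton.elim _ _).le⟩
  · obtain ⟨i, hi⟩ := Finite.exists_min hA.1.eigenvalues
    refine ⟨hA.1.eigenvalues i, hA.eigenvalues_pos i, (smul_one_le_iff hA.1).2 ?_⟩
    rw [hA.1.spectrum_real_eq_range_eigenvalues]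
    rintro _ ⟨j, rfl⟩
    exact hi j

lemma eventually_posDef_add_smul (hA : A.PosDef) (hW : W.IsHermitian) :
    ∀ᶠ s in 𝓝[>] (0 : ℝ), (A + s • W).PosDef := by
  classical
  cases nonempty_fintype n
  obtain ⟨m, hm, hmA⟩ := exists_pos_smul_one_le hA
  have lim : Tendsto (fun s : ℝ => m - s * specNorm W) (𝓝[>] 0) (𝓝 m) :=
    ((by fun_prop : Continuous fun s : ℝ => m - s * specNorm W).tendsto' 0 m
      (by simp)).mono_left nhdsWithin_le_nhds
  filter_upwards [lim.eventually_const_lt hm, self_mem_nhdsWithin] with s hs (s_pos : 0 < s)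
  refine posDef_of_smul_one_le hs ?_
  calc (m - s * specNorm W) • (1 : Matrix n n ℝ)
      = m • (1 : Matrix n n ℝ) + s • ((-specNorm W) • (1 : Matrix n n ℝ)) := by module
    _ ≤ A + s • W :=
      add_le_add hmA (smul_le_smul_of_nonneg_left (neg_specNorm_smul_one_le hW) s_pos.le)

end PosDef

section Inverse

variable {n : Type*} [Fintype n] [DecidableEq n] {A : Matrix n n ℝ}

lemma pos_of_mem_spectrum (hA : A.PosDef) {l : ℝ} (hl : l ∈ spectrum ℝ A) : 0 < l := by
  rw [hA.1.spectrum_real_eq_range_eigenvalues] at hl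
  obtain ⟨i, rfl⟩ := hl
  exact hA.eigenvalues_pos i

lemma cfc_mul_add_mul_inv (hA : A.PosDef) (c d : ℝ) :
    cfc (fun l : ℝ => c * l + d * l⁻¹) A = c • A + d • A⁻¹ := by
  have cont (f : ℝ → ℝ) : ContinuousOn f (spectrum ℝ A) := A.finite_real_spectrum.continuousOn f
  have ne_zero : ∀ l ∈ spectrum ℝ A, l ≠ 0 := fun l hl => (pos_of_mem_spectrum hA hl).ne'
  have cfc_id_eq : cfc (fun l : ℝ => l) A = A := cfc_id' ℝ A hA.1.isSelfAdjoint
  rw [cfc_add A _ _ (cont _) (cont _), cfc_const_mul _ _ A (cont _), cfc_const_mul _ _ A (cont _),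
    cfc_inv (fun l => l) A ne_zero (cont _) hA.1.isSelfAdjoint, cfc_id_eq,
    nonsing_inv_eq_ringInverse]

lemma smul_one_le_smul_add_smul_inv_iff (hA : A.PosDef) {r c d : ℝ} :
    r • (1 : Matrix n n ℝ) ≤ c • A + d • A⁻¹ ↔ ∀ l ∈ spectrum ℝ A, r ≤ c * l + d * l⁻¹ := by
  rw [← cfc_mul_add_mul_inv hA, smul_one_le_cfc_iff hA.1]

lemma smul_add_smul_inv_le_smul_one_iff (hA : A.PosDef) {r c d : ℝ} :
    c • A + d • A⁻¹ ≤ r • (1 : Matrix n n ℝ) ↔ ∀ l ∈ spectrum ℝ A, c * l + d * l⁻¹ ≤ r := by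
  rw [← cfc_mul_add_mul_inv hA, cfc_le_smul_one_iff hA.1]

lemma inv_le_inv_smul_one {a : ℝ} (ha : 0 < a) (h : a • (1 : Matrix n n ℝ) ≤ A) :
    A⁻¹ ≤ a⁻¹ • (1 : Matrix n n ℝ) := by
  have hA : A.PosDef := posDef_of_smul_one_le ha h
  have inv_le : (0 : ℝ) • A + (1 : ℝ) • A⁻¹ ≤ a⁻¹ • (1 : Matrix n n ℝ) := by
    refine (smul_add_smul_inv_le_smul_one_iff hA).2 fun l hl => ?_
    simpa using inv_anti₀ ha ((smul_one_le_iff hA.1).1 h l hl)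
  simpa using inv_le

lemma smul_one_le_smul_add_smul_inv {a c t : ℝ} (ha : 0 < a) (h : a • (1 : Matrix n n ℝ) ≤ A)
    (hc : 0 ≤ c) (ht : t ≤ c * a ^ 2) :
    (c * a + t * a⁻¹) • (1 : Matrix n n ℝ) ≤ c • A + t • A⁻¹ := by
  have hA : A.PosDef := posDef_of_smul_one_le ha h
  refine (smul_one_le_smul_add_smul_inv_iff hA).2 fun l hl => ?_
  have a_le_l : a ≤ l := (smul_one_le_iff hA.1).1 h l hl
  have l_pos : 0 < l := pos_of_mem_spectrum hA hl
  have t_le : t ≤ c * (a * l) := ht.trans <| by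
    rw [sq]; gcongr
  have factor : c * l + t * l⁻¹ - (c * a + t * a⁻¹)
      = (l - a) * (c * (a * l) - t) / (a * l) := by
    field_simp
    ring
  exact sub_nonneg.1 <| factor ▸ div_nonneg
    (mul_nonneg (sub_nonneg.2 a_le_l) (sub_nonneg.2 t_le)) (by positivity)

lemma inv_sub_mul_strictAntiOn {g : ℝ} (hg : 0 ≤ g) :
    StrictAntiOn (fun l : ℝ => l⁻¹ - g * l) (Set.Ioi 0) := by
  intro a ha b _ hab
  have inv_lt : b⁻¹ < a⁻¹ := inv_strictAnti₀ ha hab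
  have mul_le : g * a ≤ g * b := by gcongr
  exact show b⁻¹ - g * b < a⁻¹ - g * a by linarith

lemma smul_one_le_of_inv_sub_smul_le (hA : A.PosDef) {g a : ℝ} (hg : 0 ≤ g) (ha : 0 < a)
    (h : A⁻¹ - g • A ≤ (a⁻¹ - g * a) • (1 : Matrix n n ℝ)) : a • (1 : Matrix n n ℝ) ≤ A := by
  refine (smul_one_le_iff hA.1).2 fun l hl => ?_
  rw [sub_eq_neg_add A⁻¹, ← neg_smul, ← one_smul ℝ A⁻¹, smul_add_smul_inv_le_smul_one_iff hA] at h
  refine ((inv_sub_mul_strictAntiOn hg).le_iff_ge (pos_of_mem_spectrum hA hl) ha).1 ?_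
  linarith [h l hl]

lemma le_smul_one_of_le_inv_sub_smul (hA : A.PosDef) {g b : ℝ} (hg : 0 ≤ g) (hb : 0 < b)
    (h : (b⁻¹ - g * b) • (1 : Matrix n n ℝ) ≤ A⁻¹ - g • A) : A ≤ b • (1 : Matrix n n ℝ) := by
  refine (le_smul_one_iff hA.1).2 fun l hl => ?_
  rw [sub_eq_neg_add A⁻¹, ← neg_smul, ← one_smul ℝ A⁻¹, smul_one_le_smul_add_smul_inv_iff hA] at h
  refine ((inv_sub_mul_strictAntiOn hg).le_iff_ge hb (pos_of_mem_spectrum hA hl)).1 ?_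
  linarith [h l hl]

end Inverse

section Kronecker

variable {m n : Type*} [Finite m] [Finite n] {A C : Matrix m m ℝ} {B D : Matrix n n ℝ}

lemma kronecker_nonneg (hA : 0 ≤ A) (hB : 0 ≤ B) : 0 ≤ A ⊗ₖ B :=
  nonneg_iff_posSemidef.2
    ((nonneg_iff_posSemidef.1 hA).kronecker (nonneg_iff_posSemidef.1 hB))

lemma kronecker_le_kronecker (hA : 0 ≤ A) (hD : 0 ≤ D) (hAC : A ≤ C) (hBD : B ≤ D) :
    A ⊗ₖ B ≤ C ⊗ₖ D := by
  have difference : C ⊗ₖ D - A ⊗ₖ B = (C - A) ⊗ₖ D + A ⊗ₖ (D - B) := by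
    ext i j
    simp only [Matrix.sub_apply, Matrix.add_apply, kroneckerMap_apply]
    ring
  rw [← sub_nonneg, difference]
  exact add_nonneg (kronecker_nonneg (sub_nonneg.2 hAC) hD)
    (kronecker_nonneg hA (sub_nonneg.2 hBD))

lemma kronecker_le_smul_one [DecidableEq m] [DecidableEq n] {r s : ℝ} (hs : 0 ≤ s) (hA : 0 ≤ A)
    (hAr : A ≤ r • 1) (hBs : B ≤ s • 1) :
    A ⊗ₖ B ≤ (r * s) • (1 : Matrix (m × n) (m × n) ℝ) := by
  have le := kronecker_le_kronecker hA (PosSemidef.one.smul hs).nonneg hAr hBs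
  rwa [smul_kronecker, kronecker_smul, smul_smul, one_kronecker_one] at le

end Kronecker

section Frobenius

variable {n : Type*} [Fintype n] {A B D P Q : Matrix n n ℝ}

/-- The Frobenius inner product `⟪A, B⟫ = tr(Aᵀ B)`, bundled as a bilinear form. -/
noncomputable def frobInner : LinearMap.BilinForm ℝ (Matrix n n ℝ) :=
  LinearMap.mk₂ ℝ (fun A B => (Aᵀ * B).trace)
    (fun A B C => by rw [transpose_add, Matrix.add_mul, trace_add])
    (fun r A B => by rw [transpose_smul, Matrix.smul_mul, trace_smul])
    (fun A B C => by rw [Matrix.mul_add, trace_add])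
    (fun r A B => by rw [Matrix.mul_smul, trace_smul])

lemma frobInner_apply (A B : Matrix n n ℝ) : frobInner A B = (Aᵀ * B).trace := rfl

lemma frobInner_eq_sum (A B : Matrix n n ℝ) : frobInner A B = ∑ i, ∑ j, A i j * B i j := by
  rw [frobInner_apply, Finset.sum_comm]
  rfl

lemma frobInner_comm (A B : Matrix n n ℝ) : frobInner A B = frobInner B A := by
  simp only [frobInner_eq_sum, mul_comm]

lemma frobInner_eq_inner_vec (A B : Matrix n n ℝ) :
    frobInner A B = inner ℝ (WithLp.toLp 2 A.vec) (WithLp.toLp 2 B.vec) := by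
  rw [EuclideanSpace.inner_toLp_toLp, star_trivial, vec_dotProduct_vec, ← frobInner_apply,
    frobInner_comm]

lemma frobNorm_eq_norm_vec (A : Matrix n n ℝ) : frobNorm A = ‖WithLp.toLp 2 A.vec‖ := by
  simp only [frobNorm, EuclideanSpace.norm_eq, Fintype.sum_prod_type_right, vec,
    Real.norm_eq_abs, sq_abs]

lemma frobNorm_nonneg (A : Matrix n n ℝ) : 0 ≤ frobNorm A := Real.sqrt_nonneg _

lemma frobNorm_sq (A : Matrix n n ℝ) : frobNorm A ^ 2 = frobInner A A := by
  rw [frobInner_eq_inner_vec, frobNorm_eq_norm_vec, real_inner_self_eq_norm_sq]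

lemma frobInner_le_frobNorm_mul_frobNorm (A B : Matrix n n ℝ) :
    frobInner A B ≤ frobNorm A * frobNorm B := by
  rw [frobInner_eq_inner_vec, frobNorm_eq_norm_vec, frobNorm_eq_norm_vec]
  exact real_inner_le_norm _ _

lemma frobNorm_le_card_mul {τ : ℝ} (hτ : 0 ≤ τ) (h : ∀ i j, |A i j| ≤ τ) :
    frobNorm A ≤ Fintype.card n * τ := by
  refine Real.sqrt_le_iff.2 ⟨by positivity, ?_⟩
  calc ∑ i, ∑ j, A i j ^ 2 ≤ ∑ _i : n, ∑ _j : n, τ ^ 2 := by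
        exact Finset.sum_le_sum fun i _ => Finset.sum_le_sum fun j _ =>
          sq_le_sq' (abs_le.1 (h i j)).1 (abs_le.1 (h i j)).2
    _ = (Fintype.card n * τ) ^ 2 := by
        simp only [Finset.sum_const, Finset.card_univ, nsmul_eq_mul]
        ring

variable [DecidableEq n]

lemma specNorm_le_frobNorm (A : Matrix n n ℝ) : specNorm A ≤ frobNorm A := by
  refine ContinuousLinearMap.opNorm_le_bound _ (frobNorm_nonneg A) fun x => ?_
  refine (sq_le_sq₀ (norm_nonneg _) (mul_nonneg (frobNorm_nonneg A) (norm_nonneg x))).1 ?_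
  simp only [mul_pow, frobNorm, EuclideanSpace.norm_sq_eq, Real.norm_eq_abs, sq_abs]
  rw [Real.sq_sqrt (by positivity), Finset.sum_mul]
  gcongr with i
  exact Finset.sum_mul_sq_le_sq_mul_sq _ _ _

lemma specNorm_le_card_mul {τ : ℝ} (hτ : 0 ≤ τ) (h : ∀ i j, |A i j| ≤ τ) :
    specNorm A ≤ Fintype.card n * τ :=
  (specNorm_le_frobNorm A).trans (frobNorm_le_card_mul hτ h)

lemma norm_toLp_mulVec_le (A : Matrix n n ℝ) (x : n → ℝ) :
    ‖WithLp.toLp 2 (A *ᵥ x)‖ ≤ specNorm A * ‖WithLp.toLp 2 x‖ :=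
  (toEuclideanCLM (𝕜 := ℝ) A).le_opNorm (WithLp.toLp 2 x)

lemma frobNorm_le_sqrt_card_mul_specNorm (A : Matrix n n ℝ) :
    frobNorm A ≤ √(Fintype.card n) * specNorm A := by
  have column_le (j : n) : ∑ i, A i j ^ 2 ≤ specNorm A ^ 2 := by
    have norm_le := norm_toLp_mulVec_le A (Pi.single j 1)
    rw [mulVec_single_one, PiLp.toLp_single, PiLp.norm_single, norm_one,
      mul_one] at norm_le
    simpa only [EuclideanSpace.norm_sq_eq, col_apply, Real.norm_eq_abs, sq_abs] using
      pow_le_pow_left₀ (norm_nonneg _) norm_le 2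
  refine Real.sqrt_le_iff.2 ⟨mul_nonneg (Real.sqrt_nonneg _) (specNorm_nonneg A), ?_⟩
  calc ∑ i, ∑ j, A i j ^ 2 = ∑ j, ∑ i, A i j ^ 2 := Finset.sum_comm
    _ ≤ ∑ _j : n, specNorm A ^ 2 := Finset.sum_le_sum fun j _ => column_le j
    _ = (√(Fintype.card n) * specNorm A) ^ 2 := by
        rw [mul_pow, Real.sq_sqrt (Nat.cast_nonneg _), Finset.sum_const, Finset.card_univ,
          nsmul_eq_mul]

lemma frobNorm_sub_le_sqrt_card_mul {a b : ℝ}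
    (haA : a • (1 : Matrix n n ℝ) ≤ A) (hAb : A ≤ b • (1 : Matrix n n ℝ))
    (haB : a • (1 : Matrix n n ℝ) ≤ B) (hBb : B ≤ b • (1 : Matrix n n ℝ)) :
    frobNorm (A - B) ≤ √(Fintype.card n) * (b - a) := by
  cases isEmpty_or_nonempty n
  · simp [frobNorm]
  have gap_nonneg : 0 ≤ b - a := by
    obtain ⟨i⟩ := ‹Nonempty n›
    simpa using (le_iff.1 (haA.trans hAb)).diag_nonneg (i := i)
  have specNorm_le : specNorm (A - B) ≤ b - a := by
    have sub_herm : (A - B).IsHermitian :=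
      (isHermitian_of_smul_one_le haA).sub (isHermitian_of_smul_one_le haB)
    refine (specNorm_le_iff sub_herm gap_nonneg).2 ⟨?_, ?_⟩
    · simpa only [neg_sub, sub_smul] using sub_le_sub haA hBb
    · simpa only [sub_smul] using sub_le_sub hAb haB
  exact (frobNorm_le_sqrt_card_mul_specNorm _).trans (by gcongr)

lemma le_specNorm_add_frobNorm_sub_smul_one (hA : A.IsHermitian) (hB : B.IsHermitian) :
    A ≤ (specNorm B + frobNorm (A - B)) • (1 : Matrix n n ℝ) := by
  rw [add_smul]
  calc A = B + (A - B) := (add_sub_cancel B A).symm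
    _ ≤ specNorm B • (1 : Matrix n n ℝ) + frobNorm (A - B) • (1 : Matrix n n ℝ) :=
      add_le_add (le_smul_one_of_specNorm_le hB le_rfl)
        (le_smul_one_of_specNorm_le (hA.sub hB) (specNorm_le_frobNorm _))

lemma specNorm_add_frobNorm_sub_le {a b : ℝ} (ha : 0 ≤ a) (hb : 0 ≤ b)
    (haA : a • (1 : Matrix n n ℝ) ≤ A) (hAb : A ≤ b • (1 : Matrix n n ℝ))
    (haB : a • (1 : Matrix n n ℝ) ≤ B) (hBb : B ≤ b • (1 : Matrix n n ℝ)) :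
    specNorm B + frobNorm (A - B) ≤ b + √(Fintype.card n) * (b - a) := by
  have neg_le : (-b) • (1 : Matrix n n ℝ) ≤ B :=
    (smul_le_smul_of_nonneg_right (by linarith) zero_le_one).trans haB
  exact add_le_add ((specNorm_le_iff (isHermitian_of_smul_one_le haB) hb).2 ⟨neg_le, hBb⟩)
    (frobNorm_sub_le_sqrt_card_mul haA hAb haB hBb)

lemma frobNorm_smul_sub_smul_mul_mul_le {c r s t : ℝ} (hr : 0 ≤ r)
    (hP : 0 ≤ P) (hPr : P ≤ r • 1) (hQ : 0 ≤ Q) (hQs : Q ≤ s • 1)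
    (ht : 0 ≤ t) (htc : t * (s * r) ≤ c) (hc : c ≤ 1) :
    frobNorm (c • D - t • (P * D * Q)) ≤ frobNorm D := by
  set M : Matrix (n × n) (n × n) ℝ := c • 1 - t • (Q ⊗ₖ P)
  have vec_eq : (c • D - t • (P * D * Q)).vec = M *ᵥ D.vec := by
    have Q_symm : Qᵀ = Q := (nonneg_iff_posSemidef.1 hQ).1
    rw [sub_mulVec, smul_mulVec, smul_mulVec, one_mulVec, kronecker_mulVec_vec, Q_symm, vec_sub,
      vec_smul, vec_smul]
  have M_nonneg : 0 ≤ M := sub_nonneg.2 <| calc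
    t • (Q ⊗ₖ P) ≤ t • (s * r) • (1 : Matrix (n × n) (n × n) ℝ) :=
      smul_le_smul_of_nonneg_left (kronecker_le_smul_one hr hQ hQs hPr) ht
    _ = (t * (s * r)) • (1 : Matrix (n × n) (n × n) ℝ) := smul_smul _ _ _
    _ ≤ c • (1 : Matrix (n × n) (n × n) ℝ) := smul_le_smul_of_nonneg_right htc zero_le_one
  have M_le_one : M ≤ (1 : ℝ) • 1 := calc
    M ≤ c • 1 := sub_le_self _ (smul_nonneg ht (kronecker_nonneg hQ hP))
    _ ≤ (1 : ℝ) • 1 := smul_le_smul_of_nonneg_right hc zero_le_one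
  have specNorm_M_le : specNorm M ≤ 1 := by
    refine (specNorm_le_iff (nonneg_iff_posSemidef.1 M_nonneg).1 zero_le_one).2 ⟨?_, M_le_one⟩
    exact (smul_nonpos_of_nonpos_of_nonneg (by norm_num) zero_le_one).trans M_nonneg
  calc frobNorm (c • D - t • (P * D * Q)) = ‖WithLp.toLp 2 (M *ᵥ D.vec)‖ := by
        rw [frobNorm_eq_norm_vec, vec_eq]
    _ ≤ specNorm M * ‖WithLp.toLp 2 D.vec‖ := norm_toLp_mulVec_le M D.vec
    _ ≤ 1 * ‖WithLp.toLp 2 D.vec‖ := by gcongr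
    _ = frobNorm D := by rw [one_mul, frobNorm_eq_norm_vec]

end Frobenius

section SoftThreshold

variable {n : Type*} {Y Z : Matrix n n ℝ} {τ : ℝ}

lemma Sft_apply_of_le {i j : n} (h : |Y i j| ≤ τ) : Sft Y τ i j = 0 := by
  simp [Sft, h]

lemma Sft_apply_of_ge {i j : n} (h : τ ≤ |Y i j|) :
    Sft Y τ i j = Real.sign (Y i j) * (|Y i j| - τ) := by
  rw [Sft, of_apply, max_eq_left (sub_nonneg.2 h)]

lemma sub_Sft_apply_of_ge {i j : n} (h : τ ≤ |Y i j|) :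
    Y i j - Sft Y τ i j = Real.sign (Y i j) * τ := by
  have sign_mul_abs : Real.sign (Y i j) * |Y i j| = Y i j := by
    rcases lt_trichotomy (Y i j) 0 with neg | zero | pos
    · rw [Real.sign_of_neg neg, abs_of_neg neg, neg_one_mul, neg_neg]
    · rw [zero, abs_zero, mul_zero]
    · rw [Real.sign_of_pos pos, abs_of_pos pos, one_mul]
  rw [Sft_apply_of_ge h, mul_sub, sign_mul_abs, sub_sub_cancel]

lemma abs_sub_Sft_le (hτ : 0 ≤ τ) (i j : n) : |Y i j - Sft Y τ i j| ≤ τ := by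
  rcases le_total |Y i j| τ with h | h
  · rwa [Sft_apply_of_le h, sub_zero]
  · rw [sub_Sft_apply_of_ge h, abs_mul, abs_of_nonneg hτ]
    refine mul_le_of_le_one_left hτ ?_
    rcases Real.sign_apply_eq (Y i j) with h | h | h <;> simp [h]

lemma sub_Sft_mul_Sft (i j : n) :
    (Y i j - Sft Y τ i j) * Sft Y τ i j = τ * |Sft Y τ i j| := by
  rcases le_total |Y i j| τ with h | h
  · simp [Sft_apply_of_le h]
  · rw [sub_Sft_apply_of_ge h, Sft_apply_of_ge h]
    rcases Real.sign_apply_eq (Y i j) with hsign | hsign | hsign <;>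
      simp only [hsign, abs_mul, abs_neg, abs_one, abs_zero, abs_of_nonneg (sub_nonneg.2 h)] <;>
      ring

lemma isHermitian_Sft (hY : Y.IsHermitian) : (Sft Y τ).IsHermitian := by
  ext i j
  simp only [conjTranspose_apply, Sft, of_apply, star_trivial, ← hY.apply i j]

lemma frobInner_sub_Sft_le [Fintype n] (hτ : 0 ≤ τ) (Y Z : Matrix n n ℝ) :
    frobInner (Y - Sft Y τ) (Z - Sft Y τ) ≤ τ * (l1Norm Z - l1Norm (Sft Y τ)) := by
  have entry_le (i j : n) : (Y i j - Sft Y τ i j) * (Z i j - Sft Y τ i j)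
      ≤ τ * (|Z i j| - |Sft Y τ i j|) := calc
    (Y i j - Sft Y τ i j) * (Z i j - Sft Y τ i j)
        = (Y i j - Sft Y τ i j) * Z i j - τ * |Sft Y τ i j| := by
      rw [mul_sub, sub_Sft_mul_Sft]
    _ ≤ |Y i j - Sft Y τ i j| * |Z i j| - τ * |Sft Y τ i j| := by
      rw [← abs_mul]; gcongr; exact le_abs_self _
    _ ≤ τ * |Z i j| - τ * |Sft Y τ i j| := by
      gcongr; exact abs_sub_Sft_le hτ i j
    _ = τ * (|Z i j| - |Sft Y τ i j|) := by ring
  simp only [frobInner_eq_sum, l1Norm, ← Finset.sum_sub_distrib, Finset.mul_sum]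
  exact Finset.sum_le_sum fun i _ => Finset.sum_le_sum fun j _ => entry_le i j

end SoftThreshold

section Objective

variable {n : Type*} [Fintype n]

lemma l1Norm_add_le (A B : Matrix n n ℝ) : l1Norm (A + B) ≤ l1Norm A + l1Norm B := by
  simp only [l1Norm, ← Finset.sum_add_distrib]
  exact Finset.sum_le_sum fun i _ => Finset.sum_le_sum fun j _ => abs_add_le _ _

lemma l1Norm_smul (r : ℝ) (A : Matrix n n ℝ) : l1Norm (r • A) = |r| * l1Norm A := by
  simp only [l1Norm, Matrix.smul_apply, smul_eq_mul, abs_mul, Finset.mul_sum]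

lemma convexOn_l1Norm : ConvexOn ℝ Set.univ (l1Norm : Matrix n n ℝ → ℝ) :=
  ⟨convex_univ, fun A _ B _ a b ha hb _ => (l1Norm_add_le _ _).trans_eq <| by
    rw [l1Norm_smul, l1Norm_smul, abs_of_nonneg ha, abs_of_nonneg hb, smul_eq_mul, smul_eq_mul]⟩

lemma hasDerivAt_frobNorm_sq_add_smul (A W : Matrix n n ℝ) :
    HasDerivAt (fun s : ℝ => frobNorm (A + s • W) ^ 2) (2 * frobInner A W) 0 := by
  have expansion : (fun s : ℝ => frobNorm (A + s • W) ^ 2)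
      = fun s => frobInner A A + (2 * frobInner A W * s + frobInner W W * s ^ 2) := by
    funext s
    rw [frobNorm_sq]
    simp only [map_add, map_smul, LinearMap.add_apply, LinearMap.smul_apply, smul_eq_mul,
      frobInner_comm W A]
    ring
  rw [expansion]
  refine ((((hasDerivAt_id (0 : ℝ)).const_mul _).add
    ((hasDerivAt_pow 2 0).const_mul _)).const_add _).congr_deriv ?_
  simp

variable [DecidableEq n]

lemma l1Norm_single (i j : n) (r : ℝ) : l1Norm (single i j r) = |r| := by
  simp only [l1Norm, single_apply, apply_ite abs, abs_zero]
  simp [ite_and]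

lemma frobInner_single (A : Matrix n n ℝ) (i j : n) (r : ℝ) :
    frobInner A (single i j r) = A i j * r := by
  rw [frobInner_apply, trace_mul_single]
  simp

lemma hasDerivAt_det_one_add_smul (M : Matrix n n ℝ) :
    HasDerivAt (fun s : ℝ => (1 + s • M).det) M.trace 0 := by
  let P : Polynomial ℝ := (1 + (Polynomial.X : Polynomial ℝ) • M.map Polynomial.C).det
  have det_eq_eval : (fun s : ℝ => (1 + s • M).det) = fun s => P.eval s := by
    funext s
    rw [← Polynomial.coe_evalRingHom, RingHom.map_det]
    congr 1
    ext i j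
    simp [one_apply, apply_ite (Polynomial.eval s), mul_comm s]
  rw [det_eq_eval, ← derivative_det_one_add_X_smul M]
  exact P.hasDerivAt 0

lemma hasDerivAt_log_det_add_smul {A : Matrix n n ℝ} (hA : A.det ≠ 0) (W : Matrix n n ℝ) :
    HasDerivAt (fun s : ℝ => Real.log (A + s • W).det) (A⁻¹ * W).trace 0 := by
  have det_eq : (fun s : ℝ => (A + s • W).det) = fun s => A.det * (1 + s • (A⁻¹ * W)).det := by
    funext s
    rw [← det_mul, Matrix.mul_add, mul_one, Matrix.mul_smul,
      mul_nonsing_inv_cancel_left _ _ hA.isUnit]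
  have hderiv : HasDerivAt (fun s : ℝ => (A + s • W).det) (A.det * (A⁻¹ * W).trace) 0 :=
    det_eq ▸ (hasDerivAt_det_one_add_smul (A⁻¹ * W)).const_mul A.det
  refine (hderiv.log (by simpa using hA)).congr_deriv ?_
  rw [zero_smul, add_zero, mul_div_cancel_left₀ _ hA]

lemma genObj_eq_add (S : Matrix n n ℝ) (γ1 γ2 : ℝ) (A : Matrix n n ℝ) :
    genObj S γ1 γ2 A = genObj S 0 γ2 A + γ1 * l1Norm A := by
  simp only [genObj]
  ring

/-- The gradient `S - A⁻¹ + 2γ₂A` at `A` of the smooth part `genObj S 0 γ₂` of the objective. -/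
noncomputable def objGrad (S : Matrix n n ℝ) (γ2 : ℝ) (A : Matrix n n ℝ) : Matrix n n ℝ :=
  S - A⁻¹ + (2 * γ2) • A

variable {S A B W : Matrix n n ℝ} {γ1 γ2 : ℝ}

lemma isHermitian_objGrad (hS : S.IsHermitian) (hA : A.IsHermitian) :
    (objGrad S γ2 A).IsHermitian :=
  (hS.sub hA.inv).add (hA.smul (IsSelfAdjoint.all _))

lemma hasDerivAt_genObj_add_smul (hS : S.IsHermitian) (hA : A.PosDef) (W : Matrix n n ℝ) :
    HasDerivAt (fun s : ℝ => genObj S 0 γ2 (A + s • W)) (frobInner (objGrad S γ2 A) W) 0 := by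
  have trace_eq {M : Matrix n n ℝ} (hM : M.IsHermitian) (X : Matrix n n ℝ) :
      (M * X).trace = frobInner M X := by
    rw [frobInner_apply, show Mᵀ = M from hM]
  have linear_part : HasDerivAt (fun s : ℝ => (S * (A + s • W)).trace) (frobInner S W) 0 := by
    simp only [trace_eq hS, map_add, map_smul, smul_eq_mul]
    simpa using ((hasDerivAt_id (0 : ℝ)).mul_const (frobInner S W)).const_add (frobInner S A)
  have log_det_part := hasDerivAt_log_det_add_smul hA.det_pos.ne' W
  have ridge_part := (hasDerivAt_frobNorm_sq_add_smul A W).const_mul γ2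
  simp only [genObj, zero_mul, add_zero]
  refine ((linear_part.sub log_det_part).add ridge_part).congr_deriv ?_
  rw [trace_eq hA.inv.1, objGrad, map_add, map_sub, map_smul]
  simp only [LinearMap.add_apply, LinearMap.sub_apply, LinearMap.smul_apply, smul_eq_mul]
  ring

-- The penalty is not differentiable, so optimality is read off the one-sided difference quotients
-- along the segment from `A` to `B`, where convexity bounds the penalty linearly.
lemma mul_l1Norm_sub_le_frobInner_objGrad (hS : S.IsHermitian) (hγ1 : 0 ≤ γ1) (hA : A.PosDef)
    (hmin : IsMinOn (genObj S γ1 γ2) {M | M.PosDef} A) (hB : B.IsHermitian) :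
    γ1 * (l1Norm A - l1Norm B) ≤ frobInner (objGrad S γ2 A) (B - A) := by
  set f : ℝ → ℝ := fun s => genObj S 0 γ2 (A + s • (B - A))
  have hderiv : HasDerivAt f (frobInner (objGrad S γ2 A) (B - A)) 0 :=
    hasDerivAt_genObj_add_smul hS hA (B - A)
  refine ge_of_tendsto hderiv.tendsto_slope_zero_right ?_
  filter_upwards [eventually_posDef_add_smul hA (hB.sub hA.1), Ioo_mem_nhdsGT one_pos]
    with s posDef_s ⟨s_pos, s_lt_one⟩
  have min_le : f 0 + γ1 * l1Norm A ≤ f s + γ1 * l1Norm (A + s • (B - A)) := by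
    simpa only [f, zero_smul, add_zero, ← genObj_eq_add] using
      isMinOn_iff.1 hmin _ posDef_s
  have l1_le : l1Norm (A + s • (B - A)) ≤ (1 - s) * l1Norm A + s * l1Norm B := by
    have segment : A + s • (B - A) = (1 - s) • A + s • B := by module
    rw [segment]
    exact convexOn_l1Norm.2 (Set.mem_univ A) (Set.mem_univ B) (by linarith) s_pos.le (by ring)
  rw [zero_add, smul_eq_mul, le_inv_mul_iff₀ s_pos]
  linarith [mul_le_mul_of_nonneg_left l1_le hγ1]

lemma abs_frobInner_objGrad_le (hS : S.IsHermitian) (hγ1 : 0 ≤ γ1) (hA : A.PosDef)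
    (hmin : IsMinOn (genObj S γ1 γ2) {M | M.PosDef} A) (hW : W.IsHermitian) :
    |frobInner (objGrad S γ2 A) W| ≤ γ1 * l1Norm W := by
  have neg_le {X : Matrix n n ℝ} (hX : X.IsHermitian) :
      -(γ1 * l1Norm X) ≤ frobInner (objGrad S γ2 A) X := calc
    -(γ1 * l1Norm X) ≤ γ1 * (l1Norm A - l1Norm (A + X)) := by
      nlinarith [l1Norm_add_le A X]
    _ ≤ frobInner (objGrad S γ2 A) (A + X - A) :=
      mul_l1Norm_sub_le_frobInner_objGrad hS hγ1 hA hmin (hA.1.add hX)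
    _ = frobInner (objGrad S γ2 A) X := by rw [add_sub_cancel_left]
  have l1Norm_neg : l1Norm (-W) = l1Norm W := by
    rw [← neg_one_smul ℝ W, l1Norm_smul, abs_neg, abs_one, one_mul]
  have upper := neg_le hW.neg
  rw [l1Norm_neg, map_neg] at upper
  exact abs_le.2 ⟨neg_le hW, neg_le_neg_iff.1 upper⟩

lemma abs_objGrad_apply_le (hS : S.IsHermitian) (hγ1 : 0 ≤ γ1) (hA : A.PosDef)
    (hmin : IsMinOn (genObj S γ1 γ2) {M | M.PosDef} A) (i j : n) :
    |objGrad S γ2 A i j| ≤ γ1 := by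
  set G := objGrad S γ2 A
  have G_symm : G j i = G i j := (isHermitian_objGrad hS hA.1).apply i j
  let E : Matrix n n ℝ := single i j 1 + single j i 1
  have E_herm : E.IsHermitian := by
    rw [IsHermitian, conjTranspose_add, conjTranspose_single, conjTranspose_single, star_one,
      add_comm]
  have inner_eq : frobInner G E = 2 * G i j := by
    rw [map_add, frobInner_single, frobInner_single, G_symm]
    ring
  have l1Norm_E_le : l1Norm E ≤ 2 := (l1Norm_add_le _ _).trans_eq <| by
    rw [l1Norm_single, l1Norm_single, abs_one, one_add_one_eq_two]
  have abs_le : |2 * G i j| ≤ γ1 * l1Norm E :=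
    inner_eq ▸ abs_frobInner_objGrad_le hS hγ1 hA hmin E_herm
  rw [abs_mul, abs_two] at abs_le
  nlinarith

end Objective

section Scalars

variable {a c g t : ℝ}

lemma inv_sub_mul_eq_of_inv_eq (ha : 0 < a) (hg : 0 ≤ g) (h : a⁻¹ = (c + √(c ^ 2 + 8 * g)) / 2) :
    a⁻¹ - 2 * g * a = c := by
  have sq_sqrt : √(c ^ 2 + 8 * g) ^ 2 = c ^ 2 + 8 * g := Real.sq_sqrt (by positivity)
  have quadratic : a⁻¹ * a⁻¹ - c * a⁻¹ = 2 * g := by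
    rw [h]
    linarith
  have inv_mul : a⁻¹ * a = 1 := inv_mul_cancel₀ ha.ne'
  linear_combination a * quadratic + (c - a⁻¹) * inv_mul

lemma pos_of_inv_eq (hg : 0 < g) (h : a⁻¹ = (c + √(c ^ 2 + 8 * g)) / 2) : 0 < a := by
  have abs_lt : |c| < √(c ^ 2 + 8 * g) := by
    rw [← Real.sqrt_sq_eq_abs]
    exact Real.sqrt_lt_sqrt (sq_nonneg c) (by linarith)
  rw [← inv_pos, h]
  linarith [neg_abs_le c]

lemma le_one_sub_mul_sq (hg : 0 ≤ g) (h : t ≤ a ^ 2 / (2 * a ^ 2 * g + 1)) :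
    t ≤ (1 - 2 * t * g) * a ^ 2 := by
  rw [le_div_iff₀ (by positivity)] at h
  linarith

end Scalars

section Iteration

variable {n : Type*} [Fintype n] [DecidableEq n] {S A B : Matrix n n ℝ} {γ1 γ2 a t : ℝ}

lemma inv_sub_smul_eq_sub_objGrad (S : Matrix n n ℝ) (γ2 : ℝ) (A : Matrix n n ℝ) :
    A⁻¹ - (2 * γ2) • A = S - objGrad S γ2 A := by
  rw [objGrad]
  abel

lemma specNorm_objGrad_le (hS : S.IsHermitian) (hγ1 : 0 ≤ γ1) (hA : A.PosDef)
    (hmin : IsMinOn (genObj S γ1 γ2) {M | M.PosDef} A) :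
    specNorm (objGrad S γ2 A) ≤ Fintype.card n * γ1 :=
  specNorm_le_card_mul hγ1 (abs_objGrad_apply_le hS hγ1 hA hmin)

lemma smul_one_le_of_isMinOn (hS : S.IsHermitian) (hγ1 : 0 ≤ γ1) (hγ2 : 0 ≤ γ2) (hA : A.PosDef)
    (hmin : IsMinOn (genObj S γ1 γ2) {M | M.PosDef} A) (ha : 0 < a)
    (hroot : a⁻¹ - 2 * γ2 * a = maxEig S + γ1 * Fintype.card n) :
    a • (1 : Matrix n n ℝ) ≤ A := by
  have neg_grad_le : -objGrad S γ2 A ≤ (Fintype.card n * γ1) • (1 : Matrix n n ℝ) := by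
    rw [neg_le, ← neg_smul]
    exact ((specNorm_le_iff (isHermitian_objGrad hS hA.1) (by positivity)).1
      (specNorm_objGrad_le hS hγ1 hA hmin)).1
  refine smul_one_le_of_inv_sub_smul_le hA (by positivity : 0 ≤ 2 * γ2) ha ?_
  calc A⁻¹ - (2 * γ2) • A = S + -objGrad S γ2 A := by
        rw [inv_sub_smul_eq_sub_objGrad S, sub_eq_add_neg]
    _ ≤ maxEig S • (1 : Matrix n n ℝ) + (Fintype.card n * γ1) • (1 : Matrix n n ℝ) :=
        add_le_add (le_maxEig_smul_one hS) neg_grad_le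
    _ = (a⁻¹ - 2 * γ2 * a) • (1 : Matrix n n ℝ) := by
        rw [hroot]
        module

lemma le_smul_one_of_isMinOn (hS : S.IsHermitian) (hγ1 : 0 ≤ γ1) (hγ2 : 0 ≤ γ2) (hA : A.PosDef)
    (hmin : IsMinOn (genObj S γ1 γ2) {M | M.PosDef} A) {b : ℝ} (hb : 0 < b)
    (hroot : b⁻¹ - 2 * γ2 * b = minEig S - γ1 * Fintype.card n) :
    A ≤ b • (1 : Matrix n n ℝ) := by
  have grad_le : objGrad S γ2 A ≤ (Fintype.card n * γ1) • (1 : Matrix n n ℝ) :=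
    le_smul_one_of_specNorm_le (isHermitian_objGrad hS hA.1) (specNorm_objGrad_le hS hγ1 hA hmin)
  refine le_smul_one_of_le_inv_sub_smul hA (by positivity : 0 ≤ 2 * γ2) hb ?_
  calc (b⁻¹ - 2 * γ2 * b) • (1 : Matrix n n ℝ)
      = minEig S • (1 : Matrix n n ℝ) - (Fintype.card n * γ1) • (1 : Matrix n n ℝ) := by
        rw [hroot]
        module
    _ ≤ S - objGrad S γ2 A := sub_le_sub (minEig_smul_one_le hS) grad_le
    _ = A⁻¹ - (2 * γ2) • A := (inv_sub_smul_eq_sub_objGrad S γ2 A).symm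

/-- The gradient step of size `t` for the smooth part of the objective. -/
noncomputable def gradStep (S : Matrix n n ℝ) (γ2 t : ℝ) (A : Matrix n n ℝ) : Matrix n n ℝ :=
  A - t • objGrad S γ2 A

/-- One GEN-ISTA iteration: a gradient step followed by soft thresholding. -/
noncomputable def genIstaStep (S : Matrix n n ℝ) (γ1 γ2 t : ℝ) (A : Matrix n n ℝ) :
    Matrix n n ℝ :=
  Sft (gradStep S γ2 t A) (t * γ1)

lemma gradStep_eq (S : Matrix n n ℝ) (γ2 t : ℝ) (A : Matrix n n ℝ) :
    gradStep S γ2 t A = (1 - 2 * t * γ2) • A + t • A⁻¹ - t • S := by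
  rw [gradStep, objGrad]
  module

lemma isHermitian_gradStep (hS : S.IsHermitian) (hA : A.IsHermitian) :
    (gradStep S γ2 t A).IsHermitian :=
  hA.sub ((isHermitian_objGrad hS hA).smul (IsSelfAdjoint.all t))

lemma smul_one_le_gradStep (hS : S.IsHermitian) (ha : 0 < a) (ht0 : 0 ≤ t)
    (ht : t ≤ (1 - 2 * t * γ2) * a ^ 2) (hA : a • (1 : Matrix n n ℝ) ≤ A) :
    (a + t * (a⁻¹ - 2 * γ2 * a - maxEig S)) • (1 : Matrix n n ℝ) ≤ gradStep S γ2 t A := by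
  have coeff_nonneg : 0 ≤ 1 - 2 * t * γ2 :=
    nonneg_of_mul_nonneg_left (ht0.trans ht) (by positivity)
  calc (a + t * (a⁻¹ - 2 * γ2 * a - maxEig S)) • (1 : Matrix n n ℝ)
      = ((1 - 2 * t * γ2) * a + t * a⁻¹) • (1 : Matrix n n ℝ)
          - t • maxEig S • (1 : Matrix n n ℝ) := by module
    _ ≤ ((1 - 2 * t * γ2) • A + t • A⁻¹) - t • S :=
        sub_le_sub (smul_one_le_smul_add_smul_inv ha hA coeff_nonneg ht)
          (smul_le_smul_of_nonneg_left (le_maxEig_smul_one hS) ht0)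
    _ = gradStep S γ2 t A := (gradStep_eq S γ2 t A).symm

lemma smul_one_le_genIstaStep (hS : S.IsHermitian) (hγ1 : 0 ≤ γ1) (ha : 0 < a)
    (hroot : a⁻¹ - 2 * γ2 * a = maxEig S + γ1 * Fintype.card n) (ht0 : 0 ≤ t)
    (ht : t ≤ (1 - 2 * t * γ2) * a ^ 2) (hA : a • (1 : Matrix n n ℝ) ≤ A) :
    a • (1 : Matrix n n ℝ) ≤ genIstaStep S γ1 γ2 t A := by
  set Y := gradStep S γ2 t A
  have Y_herm : Y.IsHermitian := isHermitian_gradStep hS (isHermitian_of_smul_one_le hA)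
  have threshold_nonneg : 0 ≤ t * γ1 := mul_nonneg ht0 hγ1
  have residual_le : Y - Sft Y (t * γ1)
      ≤ (Fintype.card n * (t * γ1)) • (1 : Matrix n n ℝ) :=
    le_smul_one_of_specNorm_le (Y_herm.sub (isHermitian_Sft Y_herm))
      (specNorm_le_card_mul threshold_nonneg (abs_sub_Sft_le threshold_nonneg))
  calc a • (1 : Matrix n n ℝ)
      = (a + t * (a⁻¹ - 2 * γ2 * a - maxEig S)) • (1 : Matrix n n ℝ)
          - (Fintype.card n * (t * γ1)) • (1 : Matrix n n ℝ) := by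
        rw [hroot]
        module
    _ ≤ Y - (Y - Sft Y (t * γ1)) :=
        sub_le_sub (smul_one_le_gradStep hS ha ht0 ht hA) residual_le
    _ = genIstaStep S γ1 γ2 t A := sub_sub_cancel _ _

lemma frobNorm_gradStep_sub_gradStep_le (hγ2 : 0 ≤ γ2) (ha : 0 < a) (ht0 : 0 ≤ t)
    (ht : t ≤ (1 - 2 * t * γ2) * a ^ 2) (hA : a • (1 : Matrix n n ℝ) ≤ A)
    (hB : a • (1 : Matrix n n ℝ) ≤ B) :
    frobNorm (gradStep S γ2 t A - gradStep S γ2 t B) ≤ frobNorm (A - B) := by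
  have hA' : A.PosDef := posDef_of_smul_one_le ha hA
  have hB' : B.PosDef := posDef_of_smul_one_le ha hB
  have resolvent : A⁻¹ * (A - B) * B⁻¹ = -(A⁻¹ - B⁻¹) := by
    rw [inv_sub_inv (iff_of_true hA'.isUnit hB'.isUnit), ← Matrix.neg_mul, ← Matrix.mul_neg,
      neg_sub]
  have difference : gradStep S γ2 t A - gradStep S γ2 t B
      = (1 - 2 * t * γ2) • (A - B) - t • (A⁻¹ * (A - B) * B⁻¹) := by
    rw [resolvent, gradStep_eq, gradStep_eq]
    module
  rw [difference]
  refine frobNorm_smul_sub_smul_mul_mul_le (inv_nonneg.2 ha.le)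
    hA'.inv.posSemidef.nonneg (inv_le_inv_smul_one ha hA)
    hB'.inv.posSemidef.nonneg (inv_le_inv_smul_one ha hB) ht0 ?_ ?_
  · rwa [← mul_inv, ← sq, ← div_eq_mul_inv, div_le_iff₀ (by positivity)]
  · exact sub_le_self _ (by positivity)

lemma frobNorm_genIstaStep_sub_le (hS : S.IsHermitian) (hγ1 : 0 ≤ γ1) (hB : B.PosDef)
    (hmin : IsMinOn (genObj S γ1 γ2) {M | M.PosDef} B) (ht0 : 0 ≤ t)
    (hA : A.IsHermitian) :
    frobNorm (genIstaStep S γ1 γ2 t A - B)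
      ≤ frobNorm (gradStep S γ2 t A - gradStep S γ2 t B) := by
  set X := genIstaStep S γ1 γ2 t A
  set N := gradStep S γ2 t A - gradStep S γ2 t B with N_def
  have prox_ineq : frobInner (gradStep S γ2 t A - X) (B - X) ≤ t * γ1 * (l1Norm B - l1Norm X) :=
    frobInner_sub_Sft_le (mul_nonneg ht0 hγ1) _ _
  have opt_ineq : γ1 * (l1Norm B - l1Norm X) ≤ frobInner (objGrad S γ2 B) (X - B) :=
    mul_l1Norm_sub_le_frobInner_objGrad hS hγ1 hB hmin
      (isHermitian_Sft (isHermitian_gradStep hS hA))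
  have inner_eq : frobInner N (X - B) = frobNorm (X - B) ^ 2
      - frobInner (gradStep S γ2 t A - X) (B - X) + t * frobInner (objGrad S γ2 B) (X - B) := by
    have N_eq : N = (X - B) + (gradStep S γ2 t A - X) + t • objGrad S γ2 B := by
      rw [N_def, show gradStep S γ2 t B = B - t • objGrad S γ2 B from rfl]
      abel
    rw [frobNorm_sq, N_eq, ← neg_sub X B]
    simp only [map_add, map_smul, map_neg, LinearMap.add_apply, LinearMap.smul_apply, smul_eq_mul]
    ring
  have sq_le : frobNorm (X - B) * frobNorm (X - B) ≤ frobNorm N * frobNorm (X - B) := by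
    linarith [mul_le_mul_of_nonneg_left opt_ineq ht0,
      frobInner_le_frobNorm_mul_frobNorm N (X - B)]
  rcases (frobNorm_nonneg (X - B)).eq_or_lt with zero | pos
  · exact zero ▸ frobNorm_nonneg N
  · exact le_of_mul_le_mul_right sq_le pos

end Iteration

section Invariance

variable {n : Type*} [Fintype n] [DecidableEq n] {S B : Matrix n n ℝ} {γ1 γ2 a t : ℝ}

lemma smul_one_le_and_frobNorm_sub_le_of_genIstaStep (hS : S.IsHermitian) (hγ1 : 0 ≤ γ1)
    (hγ2 : 0 ≤ γ2) (hB : B.PosDef) (hmin : IsMinOn (genObj S γ1 γ2) {M | M.PosDef} B) (ha : 0 < a)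
    (hroot : a⁻¹ - 2 * γ2 * a = maxEig S + γ1 * Fintype.card n) (ht0 : 0 ≤ t)
    (ht : t ≤ (1 - 2 * t * γ2) * a ^ 2) {Ω : ℕ → Matrix n n ℝ}
    (h0 : a • (1 : Matrix n n ℝ) ≤ Ω 0) (hΩ : ∀ k, Ω (k + 1) = genIstaStep S γ1 γ2 t (Ω k))
    (k : ℕ) :
    a • (1 : Matrix n n ℝ) ≤ Ω k ∧ frobNorm (Ω k - B) ≤ frobNorm (Ω 0 - B) := by
  have hBa : a • (1 : Matrix n n ℝ) ≤ B := smul_one_le_of_isMinOn hS hγ1 hγ2 hB hmin ha hroot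
  induction k with
  | zero => exact ⟨h0, le_rfl⟩
  | succ k ih =>
    obtain ⟨lower, dist_le⟩ := ih
    rw [hΩ k]
    refine ⟨smul_one_le_genIstaStep hS hγ1 ha hroot ht0 ht lower, ?_⟩
    calc frobNorm (genIstaStep S γ1 γ2 t (Ω k) - B)
        ≤ frobNorm (gradStep S γ2 t (Ω k) - gradStep S γ2 t B) :=
          frobNorm_genIstaStep_sub_le hS hγ1 hB hmin ht0 (isHermitian_of_smul_one_le lower)
      _ ≤ frobNorm (Ω k - B) := frobNorm_gradStep_sub_gradStep_le hγ2 ha ht0 ht lower hBa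
      _ ≤ frobNorm (Ω 0 - B) := dist_le

end Invariance

theorem stmt2_general {n : Type*} [Fintype n] [DecidableEq n]
    {S : Matrix n n ℝ} (hS : S.IsHermitian) {γ1 γ2 : ℝ} (hγ1 : 0 ≤ γ1) (hγ2 : 0 ≤ γ2)
    {Ωstar : Matrix n n ℝ} (hΩstar : Ωstar.PosDef)
    (hmin : IsMinOn (genObj S γ1 γ2) {M | M.PosDef} Ωstar) {α β : ℝ} (hα0 : 0 < α) (hβ0 : 0 < β)
    (hα : α⁻¹ = (maxEig S + γ1 * Fintype.card n
      + √((maxEig S + γ1 * Fintype.card n) ^ 2 + 8 * γ2)) / 2)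
    (hβ : β⁻¹ = (minEig S - γ1 * Fintype.card n
      + √((minEig S - γ1 * Fintype.card n) ^ 2 + 8 * γ2)) / 2)
    {t : ℝ} (ht0 : 0 ≤ t) (ht : t ≤ α ^ 2 / (2 * α ^ 2 * γ2 + 1)) {Ω : ℕ → Matrix n n ℝ}
    (h0l : α • (1 : Matrix n n ℝ) ≤ Ω 0) (h0u : Ω 0 ≤ β • (1 : Matrix n n ℝ))
    (hΩ : ∀ k, Ω (k + 1) = genIstaStep S γ1 γ2 t (Ω k)) :
    (∀ k, α • (1 : Matrix n n ℝ) ≤ Ω k ∧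
        Ω k ≤ (specNorm Ωstar + frobNorm (Ω 0 - Ωstar)) • (1 : Matrix n n ℝ)) ∧
      specNorm Ωstar + frobNorm (Ω 0 - Ωstar) ≤ β + √(Fintype.card n) * (β - α) := by
  have root_α := inv_sub_mul_eq_of_inv_eq hα0 hγ2 hα
  have star_lower : α • (1 : Matrix n n ℝ) ≤ Ωstar :=
    smul_one_le_of_isMinOn hS hγ1 hγ2 hΩstar hmin hα0 root_α
  have star_upper : Ωstar ≤ β • (1 : Matrix n n ℝ) :=
    le_smul_one_of_isMinOn hS hγ1 hγ2 hΩstar hmin hβ0 (inv_sub_mul_eq_of_inv_eq hβ0 hγ2 hβ)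
  refine ⟨fun k => ?_, specNorm_add_frobNorm_sub_le hα0.le hβ0.le h0l h0u star_lower
    star_upper⟩
  obtain ⟨lower, dist_le⟩ := smul_one_le_and_frobNorm_sub_le_of_genIstaStep hS hγ1 hγ2 hΩstar hmin
    hα0 root_α ht0 (le_one_sub_mul_sq hγ2 ht) h0l hΩ k
  refine ⟨lower, ?_⟩
  calc Ω k ≤ (specNorm Ωstar + frobNorm (Ω k - Ωstar)) • (1 : Matrix n n ℝ) :=
        le_specNorm_add_frobNorm_sub_smul_one (isHermitian_of_smul_one_le lower) hΩstar.1
    _ ≤ (specNorm Ωstar + frobNorm (Ω 0 - Ωstar)) • (1 : Matrix n n ℝ) :=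
        smul_le_smul_of_nonneg_right (by gcongr) zero_le_one

/-- all GEN-ISTA iterates stay in the compact set {αI ⪯ Ω ⪯ b'I}. -/
theorem stmt2 {p : ℕ} (hp : 0 < p)
    (S : Matrix (Fin p) (Fin p) ℝ) (hS : S.IsHermitian)
    (γ1 γ2 : ℝ) (hγ1 : 0 < γ1) (hγ2 : 0 < γ2)
    (Ωstar : Matrix (Fin p) (Fin p) ℝ) (hΩstar : Ωstar.PosDef)
    (hmin : ∀ M : Matrix (Fin p) (Fin p) ℝ, M.PosDef →
      genObj S γ1 γ2 Ωstar ≤ genObj S γ1 γ2 M)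
    (α β : ℝ)
    (hα : α⁻¹ = (maxEig S + γ1 * p + Real.sqrt ((maxEig S + γ1 * p)^2 + 8*γ2)) / 2)
    (hβ : β⁻¹ = (minEig S - γ1 * p + Real.sqrt ((minEig S - γ1 * p)^2 + 8*γ2)) / 2)
    (t : ℝ) (ht0 : 0 < t) (ht : t ≤ α^2 / (2*α^2*γ2 + 1))
    (Ω : ℕ → Matrix (Fin p) (Fin p) ℝ) (h0 : (Ω 0).PosDef)
    (h0l : loewnerLE (α • (1 : Matrix (Fin p) (Fin p) ℝ)) (Ω 0))
    (h0u : loewnerLE (Ω 0) (β • (1 : Matrix (Fin p) (Fin p) ℝ)))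
    (hiter : ∀ k, Ω (k+1) = Sft (Ω k - t • (S - (Ω k)⁻¹ + (2*γ2) • Ω k)) (t*γ1))
    (b' : ℝ) (hb' : b' = specNorm Ωstar + frobNorm (Ω 0 - Ωstar)) :
    (∀ k, loewnerLE (α • (1 : Matrix (Fin p) (Fin p) ℝ)) (Ω k) ∧
        loewnerLE (Ω k) (b' • (1 : Matrix (Fin p) (Fin p) ℝ))) ∧
      b' ≤ β + Real.sqrt p * (β - α) := by
  have card_eq : (Fintype.card (Fin p) : ℝ) = p := by rw [Fintype.card_fin]
  rw [← card_eq] at hα hβ ⊢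
  subst hb'
  exact stmt2_general hS hγ1.le hγ2.le hΩstar (isMinOn_iff.2 hmin) (pos_of_inv_eq hγ2 hα)
    (pos_of_inv_eq hγ2 hβ) hα hβ ht0.le ht h0l h0u hiter
end

section
/- Let γ2 > 0 and t > 0 with m_t = 1 − 2tγ2 > 0, and let Ω be a symmetric positive definite p×p matrix with aI ⪯ Ω ⪯ bI for 0 < a < b. Define Ω_half = Ω − t(S̃ − Ω⁻¹ + 2γ2·Ω). If √(t/m_t) ∉ [a, b], then ρ_p(Ω_half) ≥ min(m_t·a + t/a, m_t·b + t/b) − t·ρ_1(S̃). -/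
open Matrix BigOperators Kronecker

/-!
Write `g x = m_t x + t / x`. The gradient step is `Ω_half = g(Ω) - t S̃` with `g(Ω)` given by the
functional calculus, so by Weyl's inequality its least eigenvalue is at least
`min g(spectrum Ω) - t ρ₁(S̃)`. The spectrum of `Ω` lies in `[a, b]`, and `g` decreases up to
`√(t / m_t)` and increases from there on: unless this critical point is interior to `[a, b]`, the
function `g` is monotone on `[a, b]` and its minimum there is attained at an endpoint.
-/

section Real

open Set

theorem mul_add_div_sub_mul_add_div {K : Type*} [Field K] {m t x y : K} (hx : x ≠ 0)
    (hy : y ≠ 0) :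
    (m * y + t / y) - (m * x + t / x) = (y - x) * (m * (x * y) - t) / (x * y) := by
  field_simp
  ring

variable {m t : ℝ}

theorem antitoneOn_mul_add_div (hm : 0 < m) :
    AntitoneOn (fun x ↦ m * x + t / x) (Ioc 0 √(t / m)) := by
  rintro x ⟨hx, -⟩ y ⟨hy, hys⟩ hxy
  have hxy_le : m * (x * y) ≤ t := (le_div_iff₀' hm).1 <|
    calc x * y ≤ y ^ 2 := by rw [sq]; gcongr
      _ ≤ t / m := (Real.le_sqrt' hy).1 hys
  rw [← sub_nonpos, mul_add_div_sub_mul_add_div hx.ne' hy.ne']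
  exact div_nonpos_of_nonpos_of_nonneg
    (mul_nonpos_of_nonneg_of_nonpos (sub_nonneg.2 hxy) (sub_nonpos.2 hxy_le)) (by positivity)

theorem monotoneOn_mul_add_div (hm : 0 < m) :
    MonotoneOn (fun x ↦ m * x + t / x) (Ioi 0 ∩ Ici √(t / m)) := by
  rintro x ⟨hx : 0 < x, hsx⟩ y ⟨hy : 0 < y, -⟩ hxy
  have le_hxy : t ≤ m * (x * y) := (div_le_iff₀' hm).1 <|
    calc t / m ≤ x ^ 2 := (Real.sqrt_le_left hx.le).1 hsx
      _ ≤ x * y := by rw [sq]; gcongr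
  rw [← sub_nonneg, mul_add_div_sub_mul_add_div hx.ne' hy.ne']
  exact div_nonneg (mul_nonneg (sub_nonneg.2 hxy) (sub_nonneg.2 le_hxy)) (by positivity)

theorem min_le_mul_add_div (hm : 0 < m) {a b x : ℝ} (ha : 0 < a) (hx : x ∈ Icc a b)
    (hout : √(t / m) ∉ Ioo a b) :
    min (m * a + t / a) (m * b + t / b) ≤ m * x + t / x := by
  obtain ⟨hax, hxb⟩ := hx
  have hx₀ : 0 < x := ha.trans_le hax
  rcases le_or_gt √(t / m) a with hsa | has
  · exact min_le_of_left_le <|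
      monotoneOn_mul_add_div hm ⟨ha, hsa⟩ ⟨hx₀, hsa.trans hax⟩ hax
  · have hbs : b ≤ √(t / m) := not_lt.1 fun hsb ↦ hout ⟨has, hsb⟩
    exact min_le_of_right_le <|
      antitoneOn_mul_add_div hm ⟨hx₀, hxb.trans hbs⟩ ⟨hx₀.trans_le hxb, hbs⟩ hxb

end Real

section FunctionalCalculus

open Set Ring

variable {A : Type*} [TopologicalSpace A] [Ring A] [StarRing A] [Algebra ℝ A]
  [ContinuousFunctionalCalculus ℝ A IsSelfAdjoint] {x : A} {m t : ℝ}

theorem cfc_mul_add_div (hx : IsSelfAdjoint x) (hx_unit : IsUnit x) :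
    cfc (fun r : ℝ ↦ m * r + t / r) x = m • x + t • x⁻¹ʳ := by
  have hinv : ContinuousOn (fun r : ℝ ↦ r⁻¹) (spectrum ℝ x) :=
    continuousOn_inv₀.mono fun r hr ↦ spectrum.ne_zero_of_mem_of_unit (a := hx_unit.unit) hr
  simp only [div_eq_mul_inv]
  rw [cfc_add .., cfc_const_mul_id .., cfc_const_mul ..,
    cfc_ringInverse_id x hx_unit]

theorem algebraMap_min_le_smul_add_smul_ringInverse [StarModule ℝ A] [PartialOrder A]
    [StarOrderedRing A] [NonnegSpectrumClass ℝ A] (hm : 0 < m) {a b : ℝ} (ha : 0 < a)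
    (hax : algebraMap ℝ A a ≤ x) (hxb : x ≤ algebraMap ℝ A b) (hout : √(t / m) ∉ Ioo a b) :
    algebraMap ℝ A (min (m * a + t / a) (m * b + t / b)) ≤ m • x + t • x⁻¹ʳ := by
  have hx : IsSelfAdjoint x := .of_ge hax (.algebraMap A (.all a))
  have hspec : spectrum ℝ x ⊆ Icc a b := fun r hr ↦
    ⟨(algebraMap_le_iff_le_spectrum hx).1 hax r hr, (le_algebraMap_iff_spectrum_le hx).1 hxb r hr⟩
  have hx_unit : IsUnit x :=
    spectrum.isUnit_of_zero_notMem ℝ fun h₀ ↦ ha.not_ge (hspec h₀).1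
  rw [← cfc_mul_add_div hx hx_unit]
  have hne : ∀ r ∈ spectrum ℝ x, r ≠ 0 := fun r hr ↦ (ha.trans_le (hspec hr).1).ne'
  exact algebraMap_le_cfc _ _ _ (fun r hr ↦ min_le_mul_add_div hm ha (hspec hr) hout)
    (by fun_prop (disch := assumption))

end FunctionalCalculus

section Matrix

open scoped MatrixOrder

variable {n : Type*} [Fintype n] {A : Matrix n n ℝ}

theorem loewnerLE_iff_le {B : Matrix n n ℝ} : loewnerLE A B ↔ A ≤ B := Iff.rfl

variable [DecidableEq n]

theorem le_minEig_of_algebraMap_le [Nonempty n] {c : ℝ} (h : algebraMap ℝ (Matrix n n ℝ) c ≤ A) :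
    c ≤ minEig A := by
  have hA : A.IsHermitian := IsSelfAdjoint.of_ge h (.algebraMap _ (.all c))
  rw [minEig, dif_pos hA]
  exact le_ciInf fun i ↦
    (algebraMap_le_iff_le_spectrum hA).1 h _ (hA.eigenvalues_mem_spectrum_real i)

theorem le_algebraMap_maxEig (hA : A.IsHermitian) :
    A ≤ algebraMap ℝ (Matrix n n ℝ) (maxEig A) := by
  rw [maxEig, dif_pos hA]
  refine le_algebraMap_of_spectrum_le fun r hr ↦ ?_
  rw [hA.spectrum_real_eq_range_eigenvalues] at hr
  obtain ⟨i, rfl⟩ := hr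
  exact le_ciSup (Set.finite_range _).bddAbove i

theorem stmt8_general [Nonempty n] (S : Matrix n n ℝ) (hS : S.IsHermitian)
    (γ2 t : ℝ) (ht : 0 ≤ t) (mt : ℝ) (hmt : mt = 1 - 2 * t * γ2) (hmtpos : 0 < mt)
    (a b : ℝ) (ha : 0 < a) (Ω : Matrix n n ℝ)
    (hl : loewnerLE (a • (1 : Matrix n n ℝ)) Ω) (hu : loewnerLE Ω (b • (1 : Matrix n n ℝ)))
    (Ωhalf : Matrix n n ℝ) (hhalf : Ωhalf = Ω - t • (S - Ω⁻¹ + (2 * γ2) • Ω))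
    (hout : √(t / mt) ∉ Set.Ioo a b) :
    min (mt * a + t / a) (mt * b + t / b) - t * maxEig S ≤ minEig Ωhalf := by
  rw [loewnerLE_iff_le, ← Algebra.algebraMap_eq_smul_one] at hl hu
  apply le_minEig_of_algebraMap_le
  calc algebraMap ℝ (Matrix n n ℝ) (min (mt * a + t / a) (mt * b + t / b) - t * maxEig S)
      = algebraMap ℝ (Matrix n n ℝ) (min (mt * a + t / a) (mt * b + t / b)) -
          t • algebraMap ℝ (Matrix n n ℝ) (maxEig S) := by
        rw [map_sub, map_mul, Algebra.smul_def]
    _ ≤ (mt • Ω + t • Ω⁻¹) - t • S := by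
        rw [Matrix.nonsing_inv_eq_ringInverse]
        gcongr
        · exact algebraMap_min_le_smul_add_smul_ringInverse hmtpos ha hl hu hout
        · exact le_algebraMap_maxEig hS
    _ = Ωhalf := by
        rw [hhalf, hmt]
        module

end Matrix

/-- lower eigenvalue bound for the gradient step when √(t/m_t) ∉ [a,b]. -/
theorem stmt8 {p : ℕ} (hp : 0 < p)
    (S : Matrix (Fin p) (Fin p) ℝ) (hS : S.IsHermitian)
    (γ2 t : ℝ) (hγ2 : 0 < γ2) (ht : 0 < t)
    (mt : ℝ) (hmt : mt = 1 - 2*t*γ2) (hmtpos : 0 < mt)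
    (a b : ℝ) (ha : 0 < a) (hab : a < b)
    (Ω : Matrix (Fin p) (Fin p) ℝ) (hΩ : Ω.PosDef)
    (hl : loewnerLE (a • (1 : Matrix (Fin p) (Fin p) ℝ)) Ω)
    (hu : loewnerLE Ω (b • (1 : Matrix (Fin p) (Fin p) ℝ)))
    (Ωhalf : Matrix (Fin p) (Fin p) ℝ)
    (hhalf : Ωhalf = Ω - t • (S - Ω⁻¹ + (2*γ2) • Ω))
    (hout : Real.sqrt (t / mt) ∉ Set.Icc a b) :
    minEig Ωhalf ≥ min (mt * a + t / a) (mt * b + t / b) - t * maxEig S := by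
  have : Nonempty (Fin p) := ⟨⟨0, hp⟩⟩
  exact stmt8_general S hS γ2 t ht.le mt hmt hmtpos a b ha Ω hl hu Ωhalf hhalf
    fun h ↦ hout (Set.Ioo_subset_Icc_self h)
end
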